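/- Let M be a model, w a world, Γ a finite set of formulas with M, w ⊨ Γ, and φ a formula with M, w ⊨ φ. Let σ be a model chain for (M, w, φ, ex(φ)) whose world-formula pairs are pairwise distinct. Then there exists a function chn' such that (M, w, chn') annotated-satisfies (Γ ∪ {φ}, ann⊥) and chn'(φ) = σ if φ ∈ Ev, where ann⊥ is the everywhere-undefined annotation. -/

import Mathlib

mutual
inductive Fml : Type where
  | var : ℕ → Fml
  | neg : Fml → Fml
  | and : Fml → Fml → Fml
  | or : Fml → Fml → Fml
  | dia : Prog → Fml → Fml
  | box : Prog → Fml → Fml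
  deriving DecidableEq
inductive Prog : Type where
  | atom : ℕ → Prog
  | conv : ℕ → Prog
  | seq : Prog → Prog → Prog
  | choice : Prog → Prog → Prog
  | star : Prog → Prog
  | test : Fml → Prog
  deriving DecidableEq
end

structure Model (W : Type) where
  R : ℕ → W → W → Prop
  V : ℕ → W → Prop

mutual
def Sat {W : Type} (M : Model W) : W → Fml → Prop
  | w, .var p => M.V p w
  | w, .neg φ => ¬ Sat M w φ
  | w, .and φ ψ => Sat M w φ ∧ Sat M w ψ
  | w, .or φ ψ => Sat M w φ ∨ Sat M w ψ
  | w, .dia γ φ => ∃ v, PRel M γ w v ∧ Sat M v φ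
  | w, .box γ φ => ∀ v, PRel M γ w v → Sat M v φ
def PRel {W : Type} (M : Model W) : Prog → W → W → Prop
  | .atom a, w, v => M.R a w v
  | .conv a, w, v => M.R a v w
  | .seq γ δ, w, v => ∃ u, PRel M γ w u ∧ PRel M δ u v
  | .choice γ δ, w, v => PRel M γ w v ∨ PRel M δ w v
  | .star γ, w, v => Relation.ReflTransGen (fun a b => PRel M γ a b) w v
  | .test φ, w, v => w = v ∧ Sat M w φ
end
mutual
def IsNNF : Fml → Prop
  | .var _ => True
  | .neg (.var _) => True
  | .neg _ => False
  | .and φ ψ => IsNNF φ ∧ IsNNF ψ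
  | .or φ ψ => IsNNF φ ∧ IsNNF ψ
  | .dia γ φ => IsNNFP γ ∧ IsNNF φ
  | .box γ φ => IsNNFP γ ∧ IsNNF φ
def IsNNFP : Prog → Prop
  | .atom _ => True
  | .conv _ => True
  | .seq γ δ => IsNNFP γ ∧ IsNNFP δ
  | .choice γ δ => IsNNFP γ ∧ IsNNFP δ
  | .star γ => IsNNFP γ
  | .test φ => IsNNF φ
end

mutual
/-- `nnf φ` is the negation normal form of `φ`. -/
def nnf : Fml → Fml
  | .var p => .var p
  | .neg φ => nnfNeg φ
  | .and φ ψ => .and (nnf φ) (nnf ψ)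
  | .or φ ψ => .or (nnf φ) (nnf ψ)
  | .dia γ φ => .dia γ (nnf φ)
  | .box γ φ => .box γ (nnf φ)
/-- `nnfNeg φ = nnf (¬ φ)`, written `∼φ`. -/
def nnfNeg : Fml → Fml
  | .var p => .neg (.var p)
  | .neg φ => nnf φ
  | .and φ ψ => .or (nnfNeg φ) (nnfNeg ψ)
  | .or φ ψ => .and (nnfNeg φ) (nnfNeg ψ)
  | .dia γ φ => .box γ (nnfNeg φ)
  | .box γ φ => .dia γ (nnfNeg φ)
end

/-- Literal programs: atomic programs or converses of atomic programs. -/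
inductive Lit : Type where
  | atom : ℕ → Lit
  | conv : ℕ → Lit
  deriving DecidableEq

def Lit.toProg : Lit → Prog
  | .atom a => .atom a
  | .conv a => .conv a

/-- The converse `l⁻` of a literal program. -/
def Lit.inv : Lit → Lit
  | .atom a => .conv a
  | .conv a => .atom a

/-- The reduction relation `⤳` on ⟨·⟩-formulae. -/
inductive Red : Fml → Fml → Prop where
  | seq (γ δ χ) : Red (.dia (.seq γ δ) χ) (.dia γ (.dia δ χ))
  | choiceL (γ δ χ) : Red (.dia (.choice γ δ) χ) (.dia γ χ)
  | choiceR (γ δ χ) : Red (.dia (.choice γ δ) χ) (.dia δ χ)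
  | star1 (γ χ) : Red (.dia (.star γ) χ) χ
  | star2 (γ χ) : Red (.dia (.star γ) χ) (.dia γ (.dia (.star γ) χ))
  | test (ϕ χ) : Red (.dia (.test ϕ) χ) χ

/-- `InPre ψ φ` means `φ ∈ pre(ψ)`, i.e. `φ = ⟨γ₁⟩…⟨γ_k⟩ψ`. -/
inductive InPre (ψ : Fml) : Fml → Prop where
  | base : InPre ψ ψ
  | step (γ φ) : InPre ψ φ → InPre ψ (.dia γ φ)

/-- `φ` is an eventuality: `φ = ⟨γ₁⟩…⟨γ_k⟩⟨γ*⟩ψ`. -/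
def IsEv (φ : Fml) : Prop := ∃ γ ψ, InPre (.dia (.star γ) ψ) φ

mutual
/-- Size of formulas. -/
def fsize : Fml → ℕ
  | .var _ => 1
  | .neg (.var _) => 1
  | .neg φ => 1 + fsize φ
  | .and φ ψ => 1 + fsize φ + fsize ψ
  | .or φ ψ => 1 + fsize φ + fsize ψ
  | .dia γ φ => psize γ + fsize φ
  | .box γ φ => psize γ + fsize φ
/-- Size of programs. -/
def psize : Prog → ℕ
  | .atom _ => 1
  | .conv _ => 1
  | .seq γ δ => 1 + psize γ + psize δ
  | .choice γ δ => 1 + psize γ + psize δ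
  | .star γ => 1 + psize γ
  | .test φ => 1 + fsize φ
end
/-- One decomposition step generating the closure `cl(φ)`. -/
inductive ClStep : Fml → Fml → Prop where
  | diaLit (l : Lit) (ψ) : ClStep (.dia l.toProg ψ) ψ
  | boxLit (l : Lit) (ψ) : ClStep (.box l.toProg ψ) ψ
  | andL (φ ψ) : ClStep (.and φ ψ) φ
  | andR (φ ψ) : ClStep (.and φ ψ) ψ
  | orL (φ ψ) : ClStep (.or φ ψ) φ
  | orR (φ ψ) : ClStep (.or φ ψ) ψ
  | boxChoiceL (γ δ φ) : ClStep (.box (.choice γ δ) φ) (.box γ φ)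
  | boxChoiceR (γ δ φ) : ClStep (.box (.choice γ δ) φ) (.box δ φ)
  | boxStar1 (γ φ) : ClStep (.box (.star γ) φ) φ
  | boxStar2 (γ φ) : ClStep (.box (.star γ) φ) (.box γ (.box (.star γ) φ))
  | diaTest1 (ψ φ) : ClStep (.dia (.test ψ) φ) φ
  | diaTest2 (ψ φ) : ClStep (.dia (.test ψ) φ) ψ
  | diaSeq (γ δ φ) : ClStep (.dia (.seq γ δ) φ) (.dia γ (.dia δ φ))
  | boxSeq (γ δ φ) : ClStep (.box (.seq γ δ) φ) (.box γ (.box δ φ))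
  | diaChoiceL (γ δ φ) : ClStep (.dia (.choice γ δ) φ) (.dia γ φ)
  | diaChoiceR (γ δ φ) : ClStep (.dia (.choice γ δ) φ) (.dia δ φ)
  | diaStar1 (γ φ) : ClStep (.dia (.star γ) φ) φ
  | diaStar2 (γ φ) : ClStep (.dia (.star γ) φ) (.dia γ (.dia (.star γ) φ))
  | boxTest1 (ψ φ) : ClStep (.box (.test ψ) φ) φ
  | boxTest2 (ψ φ) : ClStep (.box (.test ψ) φ) (nnfNeg ψ)

/-- The closure `cl(φ)`: the least set containing `φ` and closed under `ClStep`. -/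
def Cl (φ : Fml) : Set Fml := {ψ | Relation.ReflTransGen ClStep φ ψ}

/-- A single step of a (model) chain: a literal-program diamond is instantiated,
otherwise a `⤳`-reduction happens at the same world. -/
def ChainStep {W : Type} (M : Model W) : (W × Fml) → (W × Fml) → Prop
  | (w, .dia (.atom a) χ), (w', χ') => χ' = χ ∧ M.R a w w'
  | (w, .dia (.conv a) χ), (w', χ') => χ' = χ ∧ M.R a w' w
  | (w, χ), (w', χ') => Red χ χ' ∧ w' = w

/-- `σ` is a model chain for `(M, w, φ, ψ)`. -/
def ModelChain {W : Type} (M : Model W) (w : W) (φ ψ : Fml) (σ : List (W × Fml)) : Prop :=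
  ∃ h : σ ≠ [], σ.head h = (w, φ) ∧ (σ.getLast h).2 = ψ ∧
    (∀ p ∈ σ, Sat M p.1 p.2) ∧
    ∀ i, (h1 : i + 1 < σ.length) →
      ChainStep M (σ.get ⟨i, by omega⟩) (σ.get ⟨i + 1, h1⟩)

open Classical in
/-- `ex φ`: the largest non-eventuality `ψ` with `φ ∈ pre(ψ)`. -/
noncomputable def ex : Fml → Fml
  | .dia γ ψ => if IsEv (.dia γ ψ) then ex ψ else .dia γ ψ
  | φ => φ

mutual
/-- `SubF χ φ`: `χ` is a subformula of the formula `φ`. -/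
inductive SubF : Fml → Fml → Prop where
  | refl (φ) : SubF φ φ
  | neg {χ φ} : SubF χ φ → SubF χ (.neg φ)
  | andL {χ φ ψ} : SubF χ φ → SubF χ (.and φ ψ)
  | andR {χ φ ψ} : SubF χ ψ → SubF χ (.and φ ψ)
  | orL {χ φ ψ} : SubF χ φ → SubF χ (.or φ ψ)
  | orR {χ φ ψ} : SubF χ ψ → SubF χ (.or φ ψ)
  | diaF {χ γ φ} : SubF χ φ → SubF χ (.dia γ φ)
  | diaP {χ γ φ} : SubP χ γ → SubF χ (.dia γ φ)
  | boxF {χ γ φ} : SubF χ φ → SubF χ (.box γ φ)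
  | boxP {χ γ φ} : SubP χ γ → SubF χ (.box γ φ)
/-- `SubP χ γ`: `χ` is a subformula of the program `γ`. -/
inductive SubP : Fml → Prog → Prop where
  | seqL {χ γ δ} : SubP χ γ → SubP χ (.seq γ δ)
  | seqR {χ γ δ} : SubP χ δ → SubP χ (.seq γ δ)
  | choiceL {χ γ δ} : SubP χ γ → SubP χ (.choice γ δ)
  | choiceR {χ γ δ} : SubP χ δ → SubP χ (.choice γ δ)
  | star {χ γ} : SubP χ γ → SubP χ (.star γ)
  | test {χ φ} : SubF χ φ → SubP χ (.test φ)
end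
/-- `ann` is an annotation for `Γ`: it maps some eventualities `φ ∈ Γ`
to a formula `ann φ ∈ Γ` with `φ ⤳ ann φ`. -/
def IsAnnotation (Γ : Set Fml) (ann : Fml → Option Fml) : Prop :=
  ∀ φ φ', ann φ = some φ' → φ ∈ Γ ∧ IsEv φ ∧ φ' ∈ Γ ∧ Red φ φ'

/-- `ann` is full on `Γ`: it is defined on all eventualities of `Γ`. -/
def FullAnn (Γ : Set Fml) (ann : Fml → Option Fml) : Prop :=
  ∀ φ ∈ Γ, IsEv φ → (ann φ).isSome

/-- `ann` is non-cyclic: there is no cycle `φ₀, …, φ_n` with `ann φ_i = φ_{i+1 mod n+1}`. -/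
def NonCyclic (ann : Fml → Option Fml) : Prop :=
  ¬ ∃ (n : ℕ) (f : ℕ → Fml), (∀ i < n, ann (f i) = some (f (i + 1))) ∧ ann (f n) = some (f 0)

/-- One step of iterating an annotation (identity where undefined). -/
def annStep (ann : Fml → Option Fml) (φ : Fml) : Fml := (ann φ).getD φ

/-- The pure-formula version of a chain step:
if `χ = ⟨l⟩χ₀` for a literal program `l` then `χ' = χ₀`, else `χ ⤳ χ'`. -/
def FStep : Fml → Fml → Prop
  | .dia (.atom _) χ, χ' => χ' = χ
  | .dia (.conv _) χ, χ' => χ' = χ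
  | χ, χ' => Red χ χ'

mutual
/-- The atomic program `d` occurs in a formula. -/
def OccursF (d : ℕ) : Fml → Prop
  | .var _ => False
  | .neg φ => OccursF d φ
  | .and φ ψ => OccursF d φ ∨ OccursF d ψ
  | .or φ ψ => OccursF d φ ∨ OccursF d ψ
  | .dia γ φ => OccursP d γ ∨ OccursF d φ
  | .box γ φ => OccursP d γ ∨ OccursF d φ
/-- The atomic program `d` occurs in a program (as `d` or `d⁻`). -/
def OccursP (d : ℕ) : Prog → Prop
  | .atom a => a = d
  | .conv a => a = d
  | .seq γ δ => OccursP d γ ∨ OccursP d δ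
  | .choice γ δ => OccursP d γ ∨ OccursP d δ
  | .star γ => OccursP d γ
  | .test φ => OccursF d φ
end

/-- `(M, w, chn)` annotated-satisfies `(Γ, ann)`. -/
def AnnSat {W : Type} (M : Model W) (w : W)
    (chn : Fml → Option (List (W × Fml))) (Γ : Set Fml) (ann : Fml → Option Fml) : Prop :=
  (∀ ψ ∈ Γ, Sat M w ψ) ∧
  (∀ ψ ∈ Γ, IsEv ψ → (chn ψ).isSome) ∧
  (∀ ψ σ, IsEv ψ → chn ψ = some σ →
    ModelChain M w ψ (ex ψ) σ ∧
    (∀ i, (h : i < σ.length) → ∀ χ, σ.get ⟨i, h⟩ = (w, χ) → IsEv χ → chn χ = some (σ.drop i)) ∧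
    (∀ ψ', ann ψ = some ψ' → ∃ h : 1 < σ.length, σ.get ⟨1, h⟩ = (w, ψ')))

/-!
A suffix-coherent family of chains is the same thing as a positional policy: if every point has one
chosen successor and chains are obtained by following it, then the chain of a point occurring in
another chain is the corresponding suffix. Outside `σ` the policy moves along shortest paths to a
satisfied non-eventuality, so it terminates; on `σ` it is overridden to follow `σ`, which is
consistent because `σ` visits no point twice. That the resulting chains end in the right formula is
automatic: a chain step from an eventuality preserves its exit. Conversely a step from a
non-eventuality strictly shrinks the exit, so a chain for `(M, w, φ, ex φ)` leaves the eventualities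
only at its last point.
-/

section Itinerary

variable {α : Type*} {S : α → α → Prop} {T : Set α} {f : α → α}

/-- `IsItinerary S T f a l`: the list `l` is the orbit of `a` under the policy `f`, cut off at the
first visit to the target set `T`, and all of its moves are `S`-steps. -/
inductive IsItinerary (S : α → α → Prop) (T : Set α) (f : α → α) : α → List α → Prop where
  | last {a} : a ∈ T → IsItinerary S T f a [a]
  | step {a l} : a ∉ T → S a (f a) → IsItinerary S T f (f a) l → IsItinerary S T f a (a :: l)

namespace IsItinerary

theorem exists_eq_cons {a : α} {l : List α} (h : IsItinerary S T f a l) : ∃ m, l = a :: m := by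
  cases h <;> exact ⟨_, rfl⟩

theorem unique {a : α} {l m : List α} (hl : IsItinerary S T f a l) (hm : IsItinerary S T f a m) :
    l = m := by
  induction hl generalizing m with
  | last ha =>
    cases hm with
    | last _ => rfl
    | step ha' _ _ => exact absurd ha ha'
  | step ha _ _ ih =>
    cases hm with
    | last ha' => exact absurd ha' ha
    | step _ _ hm => rw [ih hm]

theorem drop {a : α} {l : List α} (h : IsItinerary S T f a l) (i : ℕ) (hi : i < l.length) :
    IsItinerary S T f l[i] (l.drop i) := by
  induction h generalizing i with
  | last ha =>
    obtain rfl : i = 0 := by simpa using hi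
    exact .last ha
  | step ha hS hl ih =>
    cases i with
    | zero => exact .step ha hS hl
    | succ i => exact ih i (by simpa using hi)

section Update

variable [DecidableEq α] {a b : α} {l : List α}

theorem update_of_notMem (h : IsItinerary S T f b l) (ha : a ∉ l) (c : α) :
    IsItinerary S T (Function.update f a c) b l := by
  induction h with
  | last hb => exact .last hb
  | step hb hS _ ih =>
    rw [List.mem_cons, not_or] at ha
    have hf := Function.update_of_ne (Ne.symm ha.1) c f
    exact .step hb (by rwa [hf]) (by rw [hf]; exact ih ha.2)

theorem cons_update (h : IsItinerary S T f b l) (hal : a ∉ l) (haT : a ∉ T) (hab : S a b) :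
    IsItinerary S T (Function.update f a b) a (a :: l) := by
  refine .step haT ?_ ?_ <;> rw [Function.update_self]
  exacts [hab, h.update_of_notMem hal b]

theorem exists_update (h : IsItinerary S T f b l) (hal : a ∉ l) (haT : a ∉ T) (hab : S a b)
    {c : α} {m : List α} (hc : IsItinerary S T f c m) :
    ∃ m', IsItinerary S T (Function.update f a b) c m' := by
  induction hc with
  | last hc => exact ⟨_, .last hc⟩
  | @step c _ hc hS _ ih =>
    rcases eq_or_ne c a with rfl | hca
    · exact ⟨_, h.cons_update hal haT hab⟩
    · have hf := Function.update_of_ne hca b f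
      obtain ⟨m', hm'⟩ := ih
      exact ⟨_, .step hc (by rwa [hf]) (by rwa [hf])⟩

end Update

end IsItinerary

theorem exists_rank_of_reaches (S : α → α → Prop) (T : Set α) :
    ∃ rank : α → ℕ, ∀ a, (∃ t ∈ T, Relation.ReflTransGen S a t) → a ∉ T →
      ∃ b, S a b ∧ (∃ t ∈ T, Relation.ReflTransGen S b t) ∧ rank b < rank a := by
  let lengths (a : α) : Set ℕ :=
    {n | ∃ l, (a :: l).IsChain S ∧ (a :: l).getLast (List.cons_ne_nil _ _) ∈ T ∧ l.length = n}
  refine ⟨fun a => sInf (lengths a), ?_⟩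
  rintro a ⟨t, ht, hat⟩ ha
  obtain ⟨l₀, hl₀, hlast₀⟩ := List.exists_isChain_cons_of_relationReflTransGen hat
  obtain ⟨l, hl, hlast, hlen⟩ := Nat.sInf_mem (s := lengths a) ⟨_, l₀, hl₀, hlast₀ ▸ ht, rfl⟩
  cases l with
  | nil => exact absurd hlast ha
  | cons b l =>
    rw [List.isChain_cons_cons] at hl
    rw [List.getLast_cons (List.cons_ne_nil _ _)] at hlast
    refine ⟨b, hl.1, ⟨_, hlast, List.relationReflTransGen_of_exists_isChain_cons l hl.2 rfl⟩, ?_⟩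
    calc sInf (lengths b) ≤ l.length := Nat.sInf_le ⟨l, hl.2, hlast, rfl⟩
      _ < (b :: l).length := Nat.lt_succ_self _
      _ = sInf (lengths a) := hlen

theorem exists_policy (S : α → α → Prop) (T : Set α) :
    ∃ f : α → α, ∀ a, (∃ t ∈ T, Relation.ReflTransGen S a t) → ∃ l, IsItinerary S T f a l := by
  classical
  obtain ⟨rank, hrank⟩ := exists_rank_of_reaches S T
  choose! f hfS hfT hflt using hrank
  refine ⟨f, fun a ha => ?_⟩
  induction hn : rank a using Nat.strong_induction_on generalizing a with
  | _ n ih =>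
    subst hn
    by_cases haT : a ∈ T
    · exact ⟨_, .last haT⟩
    · obtain ⟨l, hl⟩ := ih _ (hflt a ha haT) _ (hfT a ha haT) rfl
      exact ⟨_, .step haT (hfS a ha haT) hl⟩

theorem exists_policy_along (hST : ∀ a b, S a b → a ∉ T) {a : α} {l : List α}
    (hl : (a :: l).IsChain S) (hlast : (a :: l).getLast (List.cons_ne_nil _ _) ∈ T)
    (hnd : (a :: l).Nodup) :
    ∃ f : α → α, IsItinerary S T f a (a :: l) ∧
      ∀ c, (∃ t ∈ T, Relation.ReflTransGen S c t) → ∃ m, IsItinerary S T f c m := by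
  classical
  induction l generalizing a with
  | nil =>
    obtain ⟨f, hf⟩ := exists_policy S T
    exact ⟨f, .last hlast, hf⟩
  | cons b l ih =>
    rw [List.isChain_cons_cons] at hl
    rw [List.nodup_cons] at hnd
    rw [List.getLast_cons (List.cons_ne_nil _ _)] at hlast
    obtain ⟨f, hfb, hf⟩ := ih hl.2 hlast hnd.2
    have haT := hST a b hl.1
    refine ⟨Function.update f a b, hfb.cons_update hnd.1 haT hl.1, fun c hc => ?_⟩
    obtain ⟨m, hm⟩ := hf c hc
    exact hfb.exists_update hnd.1 haT hl.1 hm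

open Classical in
/-- The itinerary of `a` under the policy `f`, or `none` if following `f` from `a` leaves `S` or
never arrives in `T`. -/
noncomputable def itinerary (S : α → α → Prop) (T : Set α) (f : α → α) (a : α) :
    Option (List α) :=
  if h : ∃ l, IsItinerary S T f a l then some h.choose else none

theorem itinerary_eq_some_iff {a : α} {l : List α} :
    itinerary S T f a = some l ↔ IsItinerary S T f a l := by
  unfold itinerary
  split_ifs with h
  · rw [Option.some.injEq]
    exact ⟨fun hl => hl ▸ h.choose_spec, h.choose_spec.unique⟩
  · exact ⟨nofun, fun hl => absurd ⟨l, hl⟩ h⟩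

end Itinerary

section Exit

theorem isEv_dia_iff {γ : Prog} {χ : Fml} :
    IsEv (.dia γ χ) ↔ (∃ δ, γ = .star δ) ∨ IsEv χ := by
  constructor
  · rintro ⟨δ, ψ, h⟩
    cases h with
    | base => exact .inl ⟨_, rfl⟩
    | step _ _ h => exact .inr ⟨_, _, h⟩
  · rintro (⟨δ, rfl⟩ | ⟨δ, ψ, h⟩)
    · exact ⟨_, _, .base⟩
    · exact ⟨_, _, .step _ _ h⟩

theorem isEv_dia_star (γ : Prog) (χ : Fml) : IsEv (.dia (.star γ) χ) :=
  isEv_dia_iff.2 (.inl ⟨γ, rfl⟩)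

theorem IsEv.dia {χ : Fml} (h : IsEv χ) (γ : Prog) : IsEv (.dia γ χ) :=
  isEv_dia_iff.2 (.inr h)

theorem ex_dia_of_isEv {γ : Prog} {χ : Fml} (h : IsEv (.dia γ χ)) : ex (.dia γ χ) = ex χ := by
  rw [ex, if_pos h]

theorem ex_eq_self {φ : Fml} (h : ¬ IsEv φ) : ex φ = φ := by
  cases φ with
  | dia γ χ => rw [ex, if_neg h]
  | _ => simp only [ex]

theorem not_isEv_ex (φ : Fml) : ¬ IsEv (ex φ) := by
  induction φ using ex.induct with
  | case1 γ χ h ih => rwa [ex_dia_of_isEv h]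
  | case2 γ χ h => rwa [ex_eq_self h]
  | case3 φ hφ =>
    have hev : ¬ IsEv φ := by
      rintro ⟨γ, ψ, h⟩
      cases h with
      | base => exact hφ _ _ rfl
      | step δ χ _ => exact hφ _ _ rfl
    rwa [ex_eq_self hev]

theorem psize_pos (γ : Prog) : 0 < psize γ := by
  cases γ <;> simp only [psize] <;> omega

theorem fsize_ex_le (φ : Fml) : fsize (ex φ) ≤ fsize φ := by
  induction φ using ex.induct with
  | case1 γ χ h ih =>
    rw [ex_dia_of_isEv h, fsize]
    omega
  | case2 γ χ h => rw [ex_eq_self h]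
  | case3 φ hφ => rw [ex]; exact hφ

theorem Red.ex_eq {χ χ' : Fml} (h : Red χ χ') (hχ : IsEv χ) : ex χ' = ex χ := by
  rw [eq_comm]
  cases h with
  | seq γ δ χ =>
    have hev : IsEv χ := by simpa [isEv_dia_iff] using hχ
    rw [ex_dia_of_isEv hχ, ex_dia_of_isEv ((hev.dia δ).dia γ), ex_dia_of_isEv (hev.dia δ)]
  | choiceL γ δ χ | choiceR γ δ χ =>
    have hev : IsEv χ := by simpa [isEv_dia_iff] using hχ
    rw [ex_dia_of_isEv hχ, ex_dia_of_isEv (hev.dia _)]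
  | star2 γ χ => rw [ex_dia_of_isEv (hχ.dia γ)]
  | star1 | test => exact ex_dia_of_isEv hχ

theorem Red.fsize_lt {χ χ' : Fml} (h : Red χ χ') (hχ : ¬ IsEv χ) : fsize χ' < fsize χ := by
  cases h with
  | star1 | star2 => exact absurd (isEv_dia_star _ _) hχ
  | _ => simp only [fsize, psize]; omega

end Exit

section Chain

variable {W : Type} {M : Model W}

theorem Red.chainStep {χ χ' : Fml} (h : Red χ χ') (v : W) :
    ChainStep M (v, χ) (v, χ') := by
  cases h <;> exact ⟨by constructor, rfl⟩

theorem ChainStep.lit_or_red {p q : W × Fml} (h : ChainStep M p q) :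
    (∃ l : Lit, p.2 = .dia l.toProg q.2) ∨ Red p.2 q.2 := by
  unfold ChainStep at h
  split at h
  · exact .inl ⟨.atom _, by rw [h.1]; rfl⟩
  · exact .inl ⟨.conv _, by rw [h.1]; rfl⟩
  · exact .inr h.1

theorem ChainStep.ex_eq {p q : W × Fml} (h : ChainStep M p q) (hp : IsEv p.2) :
    ex q.2 = ex p.2 := by
  rcases h.lit_or_red with ⟨l, hl⟩ | hred
  · rw [hl] at hp ⊢
    exact (ex_dia_of_isEv hp).symm
  · exact hred.ex_eq hp

theorem ChainStep.fsize_ex_lt {p q : W × Fml} (h : ChainStep M p q) (hp : ¬ IsEv p.2) :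
    fsize (ex q.2) < fsize (ex p.2) := by
  rw [ex_eq_self hp]
  refine (fsize_ex_le q.2).trans_lt ?_
  rcases h.lit_or_red with ⟨l, hl⟩ | hred
  · have := psize_pos l.toProg
    rw [hl, fsize]
    omega
  · exact hred.fsize_lt hp

theorem ChainStep.fsize_ex_le {p q : W × Fml} (h : ChainStep M p q) :
    fsize (ex q.2) ≤ fsize (ex p.2) := by
  by_cases hp : IsEv p.2
  · rw [h.ex_eq hp]
  · exact (h.fsize_ex_lt hp).le

theorem fsize_ex_getLast_le {p : W × Fml} {τ : List (W × Fml)}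
    (h : (p :: τ).IsChain (ChainStep M)) :
    fsize (ex ((p :: τ).getLast (List.cons_ne_nil _ _)).2) ≤ fsize (ex p.2) := by
  refine List.IsChain.induction (fun q => fsize (ex q.2) ≤ fsize (ex p.2)) _ h
    (fun _ _ hstep hle => hstep.fsize_ex_le.trans hle) (fun _ => le_rfl) _ (List.getLast_mem _)

/-- A chain step from a satisfied eventuality. -/
def EvStep (M : Model W) (p q : W × Fml) : Prop :=
  IsEv p.2 ∧ Sat M p.1 p.2 ∧ ChainStep M p q

/-- The points at which a chain for an eventuality may end: the satisfied non-eventualities. -/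
def exitPoints (M : Model W) : Set (W × Fml) :=
  {p | ¬ IsEv p.2 ∧ Sat M p.1 p.2}

theorem isChain_evStep {p : W × Fml} {τ : List (W × Fml)}
    (hchain : (p :: τ).IsChain (ChainStep M)) (hsat : ∀ q ∈ p :: τ, Sat M q.1 q.2)
    (hexit : ex p.2 = ex ((p :: τ).getLast (List.cons_ne_nil _ _)).2) :
    (p :: τ).IsChain (EvStep M) := by
  induction τ generalizing p with
  | nil => exact .singleton p
  | cons q τ ih =>
    rw [List.isChain_cons_cons] at hchain ⊢
    rw [List.getLast_cons (List.cons_ne_nil _ _)] at hexit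
    have hp : IsEv p.2 := by
      by_contra hp
      have hlt := hchain.1.fsize_ex_lt hp
      have hle := fsize_ex_getLast_le hchain.2
      rw [← hexit] at hle
      exact hlt.not_ge hle
    exact ⟨⟨hp, hsat p List.mem_cons_self, hchain.1⟩,
      ih hchain.2 (fun r hr => hsat r (List.mem_cons_of_mem _ hr))
        ((hchain.1.ex_eq hp).trans hexit)⟩

theorem ModelChain.exists_evStep_chain {w : W} {φ : Fml} {σ : List (W × Fml)}
    (h : ModelChain M w φ (ex φ) σ) :
    ∃ τ, σ = (w, φ) :: τ ∧ ((w, φ) :: τ).IsChain (EvStep M) ∧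
      ((w, φ) :: τ).getLast (List.cons_ne_nil _ _) ∈ exitPoints M := by
  obtain ⟨hne, hhead, hlast, hsat, hsteps⟩ := h
  obtain ⟨p, τ, rfl⟩ := List.exists_cons_of_ne_nil hne
  obtain rfl : p = (w, φ) := hhead
  have hexit : ¬ IsEv (((w, φ) :: τ).getLast hne).2 := hlast ▸ not_isEv_ex φ
  refine ⟨τ, rfl, isChain_evStep (List.isChain_iff_getElem.2 hsteps) hsat ?_,
    hexit, hsat _ (List.getLast_mem hne)⟩
  rw [ex_eq_self hexit, hlast]

theorem evStep_reflTransGen_dia (γ : Prog) {v u : W} {χ : Fml} (hvu : PRel M γ v u)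
    (hu : Sat M u χ) (hEv : IsEv (.dia γ χ)) :
    Relation.ReflTransGen (EvStep M) (v, .dia γ χ) (u, χ) := by
  have hs : Sat M v (.dia γ χ) := by
    rw [Sat]
    exact ⟨u, hvu, hu⟩
  match γ with
  | .atom a | .conv a =>
    rw [PRel] at hvu
    exact .single ⟨hEv, hs, rfl, hvu⟩
  | .test ϕ =>
    rw [PRel] at hvu
    obtain ⟨rfl, -⟩ := hvu
    exact .single ⟨hEv, hs, (Red.test ϕ χ).chainStep v⟩
  | .choice γ δ =>
    have hχ : IsEv χ := by simpa [isEv_dia_iff] using hEv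
    rw [PRel] at hvu
    rcases hvu with hγ | hδ
    · exact .head ⟨hEv, hs, (Red.choiceL γ δ χ).chainStep v⟩
        (evStep_reflTransGen_dia γ hγ hu (hχ.dia γ))
    · exact .head ⟨hEv, hs, (Red.choiceR γ δ χ).chainStep v⟩
        (evStep_reflTransGen_dia δ hδ hu (hχ.dia δ))
  | .seq γ δ =>
    have hχ : IsEv χ := by simpa [isEv_dia_iff] using hEv
    rw [PRel] at hvu
    obtain ⟨t, hvt, htu⟩ := hvu
    have ht : Sat M t (.dia δ χ) := by
      rw [Sat]
      exact ⟨u, htu, hu⟩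
    exact .head ⟨hEv, hs, (Red.seq γ δ χ).chainStep v⟩
      ((evStep_reflTransGen_dia γ hvt ht ((hχ.dia δ).dia γ)).trans
        (evStep_reflTransGen_dia δ htu hu (hχ.dia δ)))
  | .star γ =>
    rw [PRel] at hvu
    induction hvu using Relation.ReflTransGen.head_induction_on with
    | refl => exact .single ⟨hEv, hs, (Red.star1 γ χ).chainStep u⟩
    | @head a b hab hbu ih =>
      have hb : Sat M b (.dia (.star γ) χ) := by
        rw [Sat]
        exact ⟨u, by rwa [PRel], hu⟩
      exact .head ⟨hEv, hs, (Red.star2 γ χ).chainStep a⟩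
        ((evStep_reflTransGen_dia γ hab hb (hEv.dia γ)).trans (ih hb))

theorem Sat.exists_exitPoint {v : W} {ψ : Fml} (hs : Sat M v ψ) :
    ∃ t ∈ exitPoints M, Relation.ReflTransGen (EvStep M) (v, ψ) t := by
  by_cases hψ : IsEv ψ
  · match ψ with
    | .dia γ χ =>
      rw [Sat] at hs
      obtain ⟨u, hvu, hu⟩ := hs
      obtain ⟨t, ht, hut⟩ := Sat.exists_exitPoint hu
      exact ⟨t, ht, (evStep_reflTransGen_dia γ hvu hu hψ).trans hut⟩
  · exact ⟨(v, ψ), ⟨hψ, hs⟩, .refl⟩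

theorem IsItinerary.modelChain {f : W × Fml → W × Fml} {p : W × Fml} {τ : List (W × Fml)}
    (h : IsItinerary (EvStep M) (exitPoints M) f p τ) : ModelChain M p.1 p.2 (ex p.2) τ := by
  induction h with
  | @last p hp =>
    exact ⟨List.cons_ne_nil _ _, rfl, (ex_eq_self hp.1).symm, by simpa using hp.2, by simp⟩
  | @step p τ _ hstep hτ ih =>
    obtain ⟨hEv, hs, hpq⟩ := hstep
    obtain ⟨ρ, rfl⟩ := hτ.exists_eq_cons
    obtain ⟨hne, -, hlast, hsat, hsteps⟩ := ih
    refine ⟨List.cons_ne_nil _ _, rfl, ?_, List.forall_mem_cons.2 ⟨hs, hsat⟩, ?_⟩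
    · rw [List.getLast_cons hne, hlast, hpq.ex_eq hEv]
    · rintro (_ | i) hi
      · exact hpq
      · exact hsteps i (by simpa using hi)

end Chain

theorem annsat_from_chain_general {W : Type} (M : Model W) (w : W) (Γ : Set Fml)
    (hΓ : ∀ ψ ∈ Γ, Sat M w ψ) (φ : Fml) (σ : List (W × Fml))
    (hσ : ModelChain M w φ (ex φ) σ) (hnd : σ.Nodup) :
    ∃ chn', AnnSat M w chn' (Γ ∪ {φ}) (fun _ => none) ∧ (IsEv φ → chn' φ = some σ) := by
  obtain ⟨τ, rfl, hchain, hlast⟩ := hσ.exists_evStep_chain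
  obtain ⟨f, hfσ, hf⟩ := exists_policy_along (fun _ _ h hT => hT.1 h.1) hchain hlast hnd
  have hsat : ∀ ψ ∈ Γ ∪ {φ}, Sat M w ψ := by
    rintro ψ (hψ | rfl)
    exacts [hΓ ψ hψ, hσ.2.2.2.1 _ List.mem_cons_self]
  refine ⟨fun ψ => itinerary (EvStep M) (exitPoints M) f (w, ψ), ⟨hsat, ?_, ?_⟩,
    fun _ => itinerary_eq_some_iff.2 hfσ⟩
  · intro ψ hψ _
    obtain ⟨ρ, hρ⟩ := hf (w, ψ) (hsat ψ hψ).exists_exitPoint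
    exact Option.isSome_of_eq_some (itinerary_eq_some_iff.2 hρ)
  · intro ψ ρ _ hρ
    rw [itinerary_eq_some_iff] at hρ
    refine ⟨hρ.modelChain, fun i hi χ hχ _ => itinerary_eq_some_iff.2 ?_, nofun⟩
    exact hχ ▸ hρ.drop i hi

/-- Prop. annsat (2): from a repetition-free model chain for
`(M, w, φ, ex(φ))` one obtains annotated satisfaction of `Γ ∪ {φ}` with the
everywhere-undefined annotation, with `chn' φ = σ` if `φ` is an eventuality. -/
theorem annsat_from_chain {W : Type} (M : Model W) (w : W) (Γ : Set Fml)
    (hfin : Γ.Finite) (hΓ : ∀ ψ ∈ Γ, Sat M w ψ) (φ : Fml) (hφ : Sat M w φ)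
    (σ : List (W × Fml)) (hσ : ModelChain M w φ (ex φ) σ) (hnd : σ.Nodup) :
    ∃ chn', AnnSat M w chn' (Γ ∪ {φ}) (fun _ => none) ∧
      (IsEv φ → chn' φ = some σ) :=
  annsat_from_chain_general M w Γ hΓ φ σ hσ hnd
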